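/- Let f be an excursion and (f_n) a sequence of excursions with f_n → f for the Skorokhod topology. If there exists N ≥ 1 such that every f_n has at most N jumps (i.e. #{t : Δ_t(f_n) > 0} ≤ N), then d_L[f_n] → d_L[f] and d_T[f_n] → d_T[f] uniformly on [0,1]², and consequently d_V[f_n] → d_V[f] uniformly on [0,1]². -/

import Mathlib

open Set Filter Topology
open scoped Classical

noncomputable section

/-- Left limit of `f` at `t`, with the convention `f(0−) = 0`. -/
def lm (f : ℝ → ℝ) (t : ℝ) : ℝ := if t = 0 then 0 else Function.leftLim f t

/-- The jump `Δ_t(f) = f t − f(t−)`. -/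
def jump (f : ℝ → ℝ) (t : ℝ) : ℝ := f t - lm f t

/-- `inf_{[s,t]} f`. -/
def infIcc (f : ℝ → ℝ) (s t : ℝ) : ℝ := sInf (f '' Icc s t)

/-- An excursion: a càdlàg function on `[0,1]`, nonnegative, vanishing at `1` (and
extended by `0` outside `[0,1]`), all of whose jumps are nonnegative. -/
structure IsExcursion (f : ℝ → ℝ) : Prop where
  nonneg : ∀ t ∈ Icc (0:ℝ) 1, 0 ≤ f t
  zero_outside : ∀ t, t ∉ Icc (0:ℝ) 1 → f t = 0
  rightCont : ∀ t ∈ Ico (0:ℝ) 1, Tendsto f (𝓝[>] t) (𝓝 (f t))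
  leftLimEx : ∀ t ∈ Ioc (0:ℝ) 1, Tendsto f (𝓝[<] t) (𝓝 (Function.leftLim f t))
  one : f 1 = 0
  jump_nonneg : ∀ t ∈ Icc (0:ℝ) 1, 0 ≤ jump f t

/-- The genealogical relation `s ⪯_f t` : `s ≤ t` and `f(s−) ≤ inf_{[s,t]} f`. -/
def pre (f : ℝ → ℝ) (s t : ℝ) : Prop := s ≤ t ∧ lm f s ≤ infIcc f s t

/-- `x_s^t(f) = 1_{s ≤ t} · max(inf_{[s,t]} f − f(s−), 0)`. -/
def xst (f : ℝ → ℝ) (s t : ℝ) : ℝ := if s ≤ t then max (infIcc f s t - lm f s) 0 else 0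

/-- The most recent common ancestor `s ∧_f t`. -/
def mrca (f : ℝ → ℝ) (s t : ℝ) : ℝ := sSup {r : ℝ | 0 ≤ r ∧ pre f r s ∧ pre f r t}

/-- `δ_t(a,b) = min(|a−b|, Δ_t(f) − |a−b|)`, the circle pseudo-distance on `[0, Δ_t(f)]`. -/
def cdel (f : ℝ → ℝ) (t a b : ℝ) : ℝ := min |a - b| (jump f t - |a - b|)

/-- `d_O(s,t) = ∑_{s ≺_f r ⪯_f t} δ_r(0, x_r^t)`. -/
def dO (f : ℝ → ℝ) (s t : ℝ) : ℝ :=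
  ∑' r : ℝ, if pre f s r ∧ s < r ∧ pre f r t then cdel f r 0 (xst f r t) else 0

/-- `d_T(s,t) = f t − inf_{[s,t]} f − ∑_{s ≺_f r ⪯_f t} x_r^t`, intended for `s ⪯_f t`. -/
def dTanc (f : ℝ → ℝ) (s t : ℝ) : ℝ :=
  f t - infIcc f s t - ∑' r : ℝ, if pre f s r ∧ s < r ∧ pre f r t then xst f r t else 0

/-- The looptree pseudo-distance `d_L[f]`. -/
def dL (f : ℝ → ℝ) (s t : ℝ) : ℝ :=
  cdel f (mrca f s t) (xst f (mrca f s t) s) (xst f (mrca f s t) t)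
    + dO f (mrca f s t) s + dO f (mrca f s t) t

/-- The tree pseudo-distance `d_T[f]`. -/
def dT (f : ℝ → ℝ) (s t : ℝ) : ℝ := dTanc f (mrca f s t) s + dTanc f (mrca f s t) t

/-- The vernation pseudo-distance `d_V[f] = d_T[f] + 2·d_L[f]`. -/
def dV (f : ℝ → ℝ) (s t : ℝ) : ℝ := dT f s t + 2 * dL f s t

/-- `Jf(t) = ∑_{r ⪯_f t} x_r^t(f)`. -/
def Jop (f : ℝ → ℝ) (t : ℝ) : ℝ := ∑' r : ℝ, if pre f r t then xst f r t else 0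

/-- `J^ε f(t) = ∑_{r ⪯_f t, Δ_r(f) ≥ ε} x_r^t(f)`. -/
def Jeps (f : ℝ → ℝ) (ε : ℝ) (t : ℝ) : ℝ :=
  ∑' r : ℝ, if pre f r t ∧ ε ≤ jump f r then xst f r t else 0

/-- Pure jump growth (PJG) excursion: `f(t) = ∑_{r ⪯_f t} x_r^t(f)` on `[0,1]`. -/
def IsPJG (f : ℝ → ℝ) : Prop := ∀ t ∈ Icc (0:ℝ) 1, f t = Jop f t

/-- An increasing bijection from `[0,1]` onto itself. -/
def IncBij (l : ℝ → ℝ) : Prop :=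
  StrictMonoOn l (Icc (0:ℝ) 1) ∧ Set.BijOn l (Icc (0:ℝ) 1) (Icc (0:ℝ) 1)

/-- The Skorokhod distance `ρ` on functions `[0,1] → ℝ`. -/
def skor (f g : ℝ → ℝ) : ℝ :=
  sInf {c : ℝ | 0 ≤ c ∧ ∃ l : ℝ → ℝ, IncBij l ∧
    ∀ x ∈ Icc (0:ℝ) 1, |l x - x| ≤ c ∧ |f x - g (l x)| ≤ c}

/-- `J` is a finite subset of `[0,1]` containing every time at which `f` jumps. -/
def IsJumpSet (f : ℝ → ℝ) (J : Finset ℝ) : Prop :=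
  (∀ r ∈ J, r ∈ Icc (0:ℝ) 1) ∧ ∀ t ∈ Icc (0:ℝ) 1, 0 < jump f t → t ∈ J

section Basic

variable {f : ℝ → ℝ}

lemma IsExcursion.nonneg' (hf : IsExcursion f) (t : ℝ) : 0 ≤ f t := by
  by_cases h : t ∈ Icc (0:ℝ) 1
  · exact hf.nonneg t h
  · exact (hf.zero_outside t h).ge

lemma IsExcursion.tendsto_lm (hf : IsExcursion f) (t : ℝ) :
    Tendsto f (𝓝[<] t) (𝓝 (lm f t)) := by
  by_cases h : t ∈ Ioc (0:ℝ) 1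
  · simpa [lm, h.1.ne'] using hf.leftLimEx t h
  have h0 : Tendsto f (𝓝[<] t) (𝓝 0) := by
    refine tendsto_const_nhds.congr' ?_
    rcases le_or_gt t 0 with ht | ht
    · filter_upwards [self_mem_nhdsWithin] with u hu
      exact (hf.zero_outside u fun hu' => absurd (hu'.1.trans_lt hu) ht.not_gt).symm
    · have ht1 : 1 < t := by
        by_contra! h1
        exact h ⟨ht, h1⟩
      filter_upwards [mem_nhdsWithin_of_mem_nhds (lt_mem_nhds ht1)] with u hu
      exact (hf.zero_outside u fun hu' => absurd hu'.2 (not_le.2 hu)).symm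
  have h1 : lm f t = 0 := by
    unfold lm
    split_ifs with h2
    · rfl
    · exact leftLim_eq_of_tendsto h0
  rwa [h1]

lemma IsExcursion.tendsto_right (hf : IsExcursion f) (t : ℝ) :
    Tendsto f (𝓝[>] t) (𝓝 (f t)) := by
  by_cases h : t ∈ Ico (0:ℝ) 1
  · exact hf.rightCont t h
  have hft : f t = 0 := by
    by_cases h' : t ∈ Icc (0:ℝ) 1
    · have : t = 1 := le_antisymm h'.2 (by by_contra! h1; exact h ⟨h'.1, h1⟩)
      rw [this, hf.one]
    · exact hf.zero_outside t h'
  rw [hft]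
  refine tendsto_const_nhds.congr' ?_
  rcases lt_or_ge t 0 with ht | ht
  · filter_upwards [mem_nhdsWithin_of_mem_nhds (gt_mem_nhds ht)] with u hu
    exact (hf.zero_outside u fun hu' => absurd hu'.1 (not_le.2 hu)).symm
  · have ht1 : 1 ≤ t := by
      by_contra! h1
      exact h ⟨ht, h1⟩
    filter_upwards [self_mem_nhdsWithin] with u hu
    exact (hf.zero_outside u fun hu' => absurd hu'.2 (not_le.2 (ht1.trans_lt hu))).symm

lemma lm_zero : lm f 0 = 0 := by simp [lm]

lemma IsExcursion.le_lm (hf : IsExcursion f) {a s t : ℝ} (hst : s < t)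
    (h : ∀ u, s < u → u < t → a ≤ f u) : a ≤ lm f t := by
  refine ge_of_tendsto (hf.tendsto_lm t) ?_
  filter_upwards [Ioo_mem_nhdsLT hst] with u hu
  exact h u hu.1 hu.2

lemma IsExcursion.lm_nonneg (hf : IsExcursion f) (t : ℝ) : 0 ≤ lm f t :=
  hf.le_lm (sub_one_lt t) fun u _ _ => hf.nonneg' u

lemma IsExcursion.exists_lt_of_lt_lm (hf : IsExcursion f) {a t : ℝ} (h : a < lm f t) :
    ∃ s < t, ∀ u, s < u → u < t → a < f u := by
  have := (hf.tendsto_lm t).eventually (lt_mem_nhds h)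
  obtain ⟨s, hs, hs'⟩ := (mem_nhdsLT_iff_exists_Ioo_subset).1 this
  exact ⟨s, hs, fun u h1 h2 => hs' ⟨h1, h2⟩⟩

lemma IsExcursion.le_of_right (hf : IsExcursion f) {a s t : ℝ} (hst : s < t)
    (h : ∀ u, s < u → u < t → a ≤ f u) : a ≤ f s := by
  refine ge_of_tendsto (hf.tendsto_right s) ?_
  filter_upwards [Ioo_mem_nhdsGT hst] with u hu
  exact h u hu.1 hu.2

lemma IsExcursion.infIcc_le (hf : IsExcursion f) {s t u : ℝ} (hs : s ≤ u) (ht : u ≤ t) :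
    infIcc f s t ≤ f u :=
  csInf_le ⟨0, by rintro _ ⟨v, -, rfl⟩; exact hf.nonneg' v⟩ ⟨u, ⟨hs, ht⟩, rfl⟩

lemma le_infIcc {a s t : ℝ} (hst : s ≤ t) (h : ∀ u, s ≤ u → u ≤ t → a ≤ f u) :
    a ≤ infIcc f s t :=
  le_csInf ⟨f s, s, ⟨le_rfl, hst⟩, rfl⟩ (by rintro _ ⟨v, hv, rfl⟩; exact h v hv.1 hv.2)

lemma IsExcursion.infIcc_anti (hf : IsExcursion f) {s t s' t' : ℝ} (hst : s ≤ t)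
    (hs : s' ≤ s) (ht : t ≤ t') : infIcc f s' t' ≤ infIcc f s t :=
  le_infIcc hst fun _ h1 h2 => hf.infIcc_le (hs.trans h1) (h2.trans ht)

lemma infIcc_self (s : ℝ) : infIcc f s s = f s := by simp [infIcc]

lemma xst_nonneg (r t : ℝ) : 0 ≤ xst f r t := by
  unfold xst
  split_ifs <;> simp

lemma xst_of_lt {r t : ℝ} (h : t < r) : xst f r t = 0 := by simp [xst, h.not_ge]

lemma xst_of_le {r t : ℝ} (h : r ≤ t) : xst f r t = max (infIcc f r t - lm f r) 0 := by
  simp [xst, h]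

lemma xst_self {r : ℝ} (hr : 0 ≤ jump f r) : xst f r r = jump f r := by
  rw [xst_of_le le_rfl, infIcc_self]
  exact max_eq_left hr

lemma pre_of_xst_ne_zero {r t : ℝ} (h : xst f r t ≠ 0) : pre f r t := by
  rcases lt_or_ge t r with h1 | h1
  · exact absurd (xst_of_lt h1) h
  · refine ⟨h1, ?_⟩
    by_contra! h2
    rw [xst_of_le h1] at h
    exact h (max_eq_right (by linarith))

lemma IsExcursion.xst_le_jump (hf : IsExcursion f) {r : ℝ} (hr : r ∈ Icc (0:ℝ) 1) (t : ℝ) :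
    xst f r t ≤ jump f r := by
  rcases lt_or_ge t r with h1 | h1
  · rw [xst_of_lt h1]
    exact hf.jump_nonneg r hr
  · rw [xst_of_le h1]
    refine max_le ?_ (hf.jump_nonneg r hr)
    unfold jump
    linarith [hf.infIcc_le (f := f) le_rfl h1]

lemma IsExcursion.xst_anti (hf : IsExcursion f) {r t t' : ℝ} (hr : r ≤ t) (ht : t ≤ t') :
    xst f r t' ≤ xst f r t := by
  rw [xst_of_le hr, xst_of_le (hr.trans ht)]
  gcongr
  exact hf.infIcc_anti hr le_rfl ht

lemma IsJumpSet.xst_eq_zero {J : Finset ℝ} (hJ : IsJumpSet f J) (hf : IsExcursion f) {r : ℝ}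
    (hr : r ∈ Icc (0:ℝ) 1) (hrJ : r ∉ J) (t : ℝ) : xst f r t = 0 := by
  refine le_antisymm ((hf.xst_le_jump hr t).trans ?_) (xst_nonneg r t)
  by_contra! h
  exact hrJ (hJ.2 r hr h)

lemma cdel_self {r : ℝ} (h : 0 ≤ jump f r) (a : ℝ) : cdel f r a a = 0 := by
  simp [cdel, h]

lemma cdel_comm (r a b : ℝ) : cdel f r a b = cdel f r b a := by
  simp [cdel, abs_sub_comm]

end Basic

section Ancestor

variable {f : ℝ → ℝ} {s t : ℝ}

lemma IsExcursion.zero_mem_ancestors (hf : IsExcursion f) (hs : 0 ≤ s) (ht : 0 ≤ t) :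
    (0:ℝ) ∈ {r : ℝ | 0 ≤ r ∧ pre f r s ∧ pre f r t} := by
  refine ⟨le_rfl, ⟨hs, ?_⟩, ⟨ht, ?_⟩⟩ <;> rw [lm_zero] <;>
    exact le_infIcc (by assumption) fun u _ _ => hf.nonneg' u

lemma bddAbove_ancestors : BddAbove {r : ℝ | 0 ≤ r ∧ pre f r s ∧ pre f r t} :=
  ⟨s, fun _ hr => hr.2.1.1⟩

lemma le_mrca {r : ℝ} (h0 : 0 ≤ r) (hs : pre f r s) (ht : pre f r t) : r ≤ mrca f s t :=
  le_csSup bddAbove_ancestors ⟨h0, hs, ht⟩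

lemma mrca_comm : mrca f s t = mrca f t s := by
  unfold mrca
  congr 1
  ext r
  simp only [mem_ofPred_eq]
  tauto

lemma IsExcursion.pre_mrca_left (hf : IsExcursion f) (hs : 0 ≤ s) (ht : 0 ≤ t) :
    pre f (mrca f s t) s := by
  have h0 := hf.zero_mem_ancestors hs ht
  have hms : mrca f s t ≤ s := csSup_le ⟨0, h0⟩ fun r hr => hr.2.1.1
  refine ⟨hms, le_infIcc hms fun u hu1 hu2 => ?_⟩
  by_contra! hlt
  obtain ⟨c, hc1, hc2⟩ := exists_between hlt
  obtain ⟨v, hv, hv'⟩ := hf.exists_lt_of_lt_lm hc2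
  obtain ⟨r, hr, hvr⟩ := exists_lt_of_lt_csSup ⟨0, h0⟩ hv
  have hrm : r ≤ mrca f s t := le_mrca hr.1 hr.2.1 hr.2.2
  have hru : lm f r ≤ f u := hr.2.1.2.trans (hf.infIcc_le (hrm.trans hu1) hu2)
  have hcr : c ≤ lm f r :=
    hf.le_lm hvr fun w h1 h2 => (hv' w h1 (h2.trans_le hrm)).le
  linarith

lemma IsExcursion.pre_mrca_right (hf : IsExcursion f) (hs : 0 ≤ s) (ht : 0 ≤ t) :
    pre f (mrca f s t) t := by
  rw [mrca_comm]
  exact hf.pre_mrca_left ht hs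

lemma IsExcursion.mrca_nonneg (hf : IsExcursion f) (hs : 0 ≤ s) (ht : 0 ≤ t) :
    0 ≤ mrca f s t :=
  have h := hf.zero_mem_ancestors hs ht
  le_mrca h.1 h.2.1 h.2.2

lemma IsExcursion.infIcc_le_of_pre (hf : IsExcursion f) {r m : ℝ} (hr : r < m)
    (hs : pre f m s) (ht : pre f m t) : infIcc f r s ≤ infIcc f r t := by
  refine le_infIcc (hr.le.trans ht.1) fun u hu1 hu2 => ?_
  rcases le_or_gt u m with hum | hum
  · exact hf.infIcc_le hu1 (hum.trans hs.1)
  · calc infIcc f r s ≤ lm f m :=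
          hf.le_lm hr fun v h1 h2 => hf.infIcc_le h1.le (h2.le.trans hs.1)
      _ ≤ infIcc f m t := ht.2
      _ ≤ f u := hf.infIcc_le hum.le hu2

lemma IsExcursion.xst_eq_of_lt_mrca (hf : IsExcursion f) (hs : 0 ≤ s) (ht : 0 ≤ t) {r : ℝ}
    (hr : r < mrca f s t) : xst f r s = xst f r t := by
  have h1 := hf.pre_mrca_left hs ht
  have h2 := hf.pre_mrca_right hs ht
  rw [xst_of_le (hr.le.trans h1.1), xst_of_le (hr.le.trans h2.1),
    le_antisymm (hf.infIcc_le_of_pre hr h1 h2) (hf.infIcc_le_of_pre hr h2 h1)]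

lemma xst_eq_zero_of_mrca_lt {r : ℝ} (h0 : 0 ≤ r) (hr : mrca f s t < r) :
    xst f r s = 0 ∨ xst f r t = 0 := by
  by_contra! h
  exact hr.not_ge (le_mrca h0 (pre_of_xst_ne_zero h.1) (pre_of_xst_ne_zero h.2))

lemma IsExcursion.infIcc_mrca_of_le (hf : IsExcursion f) (hs : 0 ≤ s) (hst : s ≤ t) :
    infIcc f (mrca f s t) t = infIcc f s t := by
  have ht := hs.trans hst
  have hms := (hf.pre_mrca_left hs ht).1
  refine le_antisymm (hf.infIcc_anti hst hms le_rfl) ?_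
  refine le_infIcc (hms.trans hst) fun u hu1 hu2 => ?_
  by_contra! hlt
  have hus : u < s := by
    by_contra! h
    exact hlt.not_ge (hf.infIcc_le h hu2)
  set A : Set ℝ := {v | v ≤ s ∧ f v < infIcc f s t} with hA
  have huA : u ∈ A := ⟨hus.le, hlt⟩
  have hbdd : BddAbove A := ⟨s, fun v hv => hv.1⟩
  set r := sSup A with hr
  have hrs : r ≤ s := csSup_le ⟨u, huA⟩ fun v hv => hv.1
  have hur : u ≤ r := le_csSup hbdd huA
  have hgt : ∀ v, r < v → v ≤ t → infIcc f s t ≤ f v := by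
    intro v h1 h2
    by_contra! h3
    rcases le_or_gt v s with h4 | h4
    · exact h1.not_ge (le_csSup hbdd ⟨h4, h3⟩)
    · exact h3.not_ge (hf.infIcc_le h4.le h2)
  have hfr : infIcc f s t ≤ f r := by
    rcases hrs.lt_or_eq with h | h
    · exact hf.le_of_right h fun v h1 h2 => hgt v h1 (h2.le.trans hst)
    · rw [h]
      exact hf.infIcc_le le_rfl hst
  have hru : u < r := lt_of_le_of_ne hur fun h => by
    rw [← h] at hfr
    exact hlt.not_ge hfr
  have hge : ∀ v, r ≤ v → v ≤ t → infIcc f s t ≤ f v := by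
    intro v h1 h2
    rcases h1.lt_or_eq with h | h
    · exact hgt v h h2
    · exact h ▸ hfr
  have hlm : lm f r ≤ infIcc f s t := by
    by_contra! h
    obtain ⟨v, hv, hv'⟩ := hf.exists_lt_of_lt_lm h
    obtain ⟨w, hw, hvw⟩ := exists_lt_of_lt_csSup ⟨u, huA⟩ hv
    have hwr : w < r := lt_of_le_of_ne (le_csSup hbdd hw) fun h => by
      rw [← h] at hfr
      exact hw.2.not_ge hfr
    exact (hv' w hvw hwr).not_gt hw.2
  have hrm : r ≤ mrca f s t :=
    le_mrca (((hf.mrca_nonneg hs ht).trans hu1).trans hur)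
      ⟨hrs, hlm.trans (le_infIcc hrs fun v h1 h2 => hge v h1 (h2.trans hst))⟩
      ⟨hrs.trans hst, hlm.trans (le_infIcc (hrs.trans hst) hge)⟩
  linarith

lemma IsExcursion.min_infIcc_mrca (hf : IsExcursion f) (hs : 0 ≤ s) (ht : 0 ≤ t) :
    min (infIcc f (mrca f s t) s) (infIcc f (mrca f s t) t) = infIcc f (min s t) (max s t) := by
  wlog hst : s ≤ t generalizing s t
  · rw [min_comm, mrca_comm, min_comm s t, max_comm s t]
    exact this ht hs (le_of_not_ge hst)
  rw [min_eq_left hst, max_eq_right hst, ← hf.infIcc_mrca_of_le hs hst]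
  exact min_eq_right (hf.infIcc_anti (hf.pre_mrca_left hs ht).1 le_rfl hst)

end Ancestor

section SumFormula

variable {f : ℝ → ℝ} {s t : ℝ} {J : Finset ℝ}

lemma tsum_ancestors_eq (hf : IsExcursion f) (hJ : IsJumpSet f J) (ψ : ℝ → ℝ → ℝ)
    (hψ : ∀ r ∈ J, ψ r 0 = 0) (hψ' : ∀ r ∈ Icc (0:ℝ) 1, r ∉ J → ψ r 0 = 0)
    {m : ℝ} (hm : 0 ≤ m) (ht : t ≤ 1) (hmt : pre f m t) :
    ∑' r : ℝ, (if pre f m r ∧ m < r ∧ pre f r t then ψ r (xst f r t) else 0)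
      = ∑ r ∈ J, if m < r then ψ r (xst f r t) else 0 := by
  rw [tsum_eq_sum (s := J)]
  · refine Finset.sum_congr rfl fun r hr => ?_
    by_cases hmr : m < r
    · by_cases h : pre f r t
      · have : pre f m r :=
          ⟨hmr.le, hmt.2.trans (hf.infIcc_anti hmr.le le_rfl h.1)⟩
        simp [this, hmr, h]
      · have h0 : xst f r t = 0 := by
          by_contra h'
          exact h (pre_of_xst_ne_zero h')
        simp [hmr, h, h0, hψ r hr]
    · simp [hmr]
  · intro r hr
    split_ifs with h
    · have hr1 : r ∈ Icc (0:ℝ) 1 := ⟨hm.trans h.2.1.le, h.2.2.1.trans ht⟩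
      rw [hJ.xst_eq_zero hf hr1 hr, hψ' r hr1 hr]
    · rfl

lemma sum_eq_mrca_add_sum (hf : IsExcursion f) (hJ : IsJumpSet f J) (φ : ℝ → ℝ → ℝ → ℝ)
    (ψ : ℝ → ℝ → ℝ) (hφ : ∀ r ∈ Icc (0:ℝ) 1, ∀ a, φ r a a = 0)
    (hφl : ∀ r a, φ r 0 a = ψ r a) (hφr : ∀ r a, φ r a 0 = ψ r a)
    (hs : s ∈ Icc (0:ℝ) 1) (ht : t ∈ Icc (0:ℝ) 1) :
    ∑ r ∈ J, φ r (xst f r s) (xst f r t)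
      = φ (mrca f s t) (xst f (mrca f s t) s) (xst f (mrca f s t) t)
        + (∑ r ∈ J, if mrca f s t < r then ψ r (xst f r s) else 0)
        + ∑ r ∈ J, if mrca f s t < r then ψ r (xst f r t) else 0 := by
  set m := mrca f s t with hm
  have hm1 : m ∈ Icc (0:ℝ) 1 :=
    ⟨hf.mrca_nonneg hs.1 ht.1, (hf.pre_mrca_left hs.1 ht.1).1.trans hs.2⟩
  have hψ : ∀ r ∈ Icc (0:ℝ) 1, ψ r 0 = 0 := fun r hr => by rw [← hφl, hφ r hr]
  have hJm : φ m (xst f m s) (xst f m t)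
      = ∑ r ∈ J, if r = m then φ r (xst f r s) (xst f r t) else 0 := by
    rw [Finset.sum_ite_eq']
    split_ifs with h
    · rfl
    · rw [hJ.xst_eq_zero hf hm1 h, hJ.xst_eq_zero hf hm1 h, hφ m hm1]
  rw [hJm, ← Finset.sum_add_distrib, ← Finset.sum_add_distrib]
  refine Finset.sum_congr rfl fun r hr => ?_
  have hr1 := hJ.1 r hr
  rcases lt_trichotomy r m with h | h | h
  · rw [hf.xst_eq_of_lt_mrca hs.1 ht.1 h, hφ r hr1]
    simp [h.ne, h.not_gt]
  · simp [h]
  · rcases xst_eq_zero_of_mrca_lt hr1.1 h with h0 | h0 <;>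
      simp [h.ne', h, h0, hφl, hφr, hψ r hr1]

lemma dL_eq_sum (hf : IsExcursion f) (hJ : IsJumpSet f J)
    (hs : s ∈ Icc (0:ℝ) 1) (ht : t ∈ Icc (0:ℝ) 1) :
    dL f s t = ∑ r ∈ J, cdel f r (xst f r s) (xst f r t) := by
  have h0 : ∀ r ∈ Icc (0:ℝ) 1, cdel f r 0 0 = 0 :=
    fun r hr => cdel_self (hf.jump_nonneg r hr) 0
  rw [sum_eq_mrca_add_sum hf hJ (cdel f) (fun r a => cdel f r 0 a)
    (fun r hr => cdel_self (hf.jump_nonneg r hr)) (fun _ _ => rfl)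
    (fun r a => cdel_comm r a 0) hs ht]
  unfold dL dO
  rw [tsum_ancestors_eq hf hJ (fun r a => cdel f r 0 a) (fun r hr => h0 r (hJ.1 r hr))
      (fun r hr _ => h0 r hr) (hf.mrca_nonneg hs.1 ht.1) hs.2 (hf.pre_mrca_left hs.1 ht.1),
    tsum_ancestors_eq hf hJ (fun r a => cdel f r 0 a) (fun r hr => h0 r (hJ.1 r hr))
      (fun r hr _ => h0 r hr) (hf.mrca_nonneg hs.1 ht.1) ht.2 (hf.pre_mrca_right hs.1 ht.1)]

lemma dT_eq_sum (hf : IsExcursion f) (hJ : IsJumpSet f J)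
    (hs : s ∈ Icc (0:ℝ) 1) (ht : t ∈ Icc (0:ℝ) 1) :
    dT f s t = f s + f t - 2 * infIcc f (min s t) (max s t)
      - ∑ r ∈ J, |xst f r s - xst f r t| := by
  have hl := hf.pre_mrca_left hs.1 ht.1
  have hr := hf.pre_mrca_right hs.1 ht.1
  rw [sum_eq_mrca_add_sum hf hJ (fun _ a b => |a - b|) (fun _ a => |a|)
    (fun _ _ _ => by simp) (fun _ _ => by simp) (fun _ _ => by simp) hs ht]
  unfold dT dTanc
  rw [tsum_ancestors_eq hf hJ (fun _ a => a) (fun _ _ => rfl) (fun _ _ _ => rfl)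
      (hf.mrca_nonneg hs.1 ht.1) hs.2 hl,
    tsum_ancestors_eq hf hJ (fun _ a => a) (fun _ _ => rfl) (fun _ _ _ => rfl)
      (hf.mrca_nonneg hs.1 ht.1) ht.2 hr,
    ← hf.min_infIcc_mrca hs.1 ht.1]
  simp only [abs_of_nonneg (xst_nonneg _ _)]
  rw [xst_of_le hl.1, xst_of_le hr.1, max_eq_left (sub_nonneg.2 hl.2),
    max_eq_left (sub_nonneg.2 hr.2), sub_sub_sub_cancel_right]
  rcases le_total (infIcc f (mrca f s t) s) (infIcc f (mrca f s t) t) with h | h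
  · rw [min_eq_left h, abs_of_nonpos (sub_nonpos.2 h)]
    ring
  · rw [min_eq_right h, abs_of_nonneg (sub_nonneg.2 h)]
    ring

end SumFormula

section Modulus

variable {f : ℝ → ℝ} {J : Finset ℝ}

lemma continuousAt_sub_jumps (hf : IsExcursion f) (hJ : IsJumpSet f J) {t : ℝ}
    (ht : t ∈ Icc (0:ℝ) 1) :
    ContinuousAt (fun u => f u - ∑ r ∈ J, if r ≤ u then jump f r else 0) t := by
  rw [continuousAt_iff_continuous_left'_right']
  constructor
  · have hsum : Tendsto (fun u => ∑ r ∈ J, if r ≤ u then jump f r else 0) (𝓝[<] t)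
        (𝓝 (∑ r ∈ J, if r < t then jump f r else 0)) := by
      refine tendsto_finsetSum _ fun r _ => tendsto_const_nhds.congr' ?_
      by_cases h : r < t
      · filter_upwards [Ioo_mem_nhdsLT h] with u hu
        simp [h, hu.1.le]
      · filter_upwards [self_mem_nhdsWithin] with u hu
        have : ¬ r ≤ u := fun h' => h (h'.trans_lt hu)
        simp [h, this]
    have heq : lm f t - ∑ r ∈ J, (if r < t then jump f r else 0)
        = f t - ∑ r ∈ J, if r ≤ t then jump f r else 0 := by
      have h1 : ∑ r ∈ J, (if r ≤ t then jump f r else 0)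
          = (∑ r ∈ J, if r < t then jump f r else 0)
            + ∑ r ∈ J, if r = t then jump f r else 0 := by
        rw [← Finset.sum_add_distrib]
        refine Finset.sum_congr rfl fun r _ => ?_
        rcases lt_trichotomy r t with h | h | h
        · simp [h, h.le, h.ne]
        · simp [h]
        · simp [h.not_ge, h.not_gt, h.ne']
      have h2 : ∑ r ∈ J, (if r = t then jump f r else 0) = jump f t := by
        rw [Finset.sum_ite_eq']
        split_ifs with h
        · rfl
        · by_contra h3
          exact h (hJ.2 t ht (lt_of_le_of_ne (hf.jump_nonneg t ht) h3))
      rw [h1, h2, jump]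
      ring
    have := (hf.tendsto_lm t).sub hsum
    rw [heq] at this
    exact this
  · refine (hf.tendsto_right t).sub (tendsto_finsetSum _ fun r _ => ?_)
    refine tendsto_const_nhds.congr' ?_
    by_cases h : r ≤ t
    · filter_upwards [self_mem_nhdsWithin] with u hu
      have : r ≤ u := h.trans (le_of_lt hu)
      simp [h, this]
    · filter_upwards [Ioo_mem_nhdsGT (not_le.1 h)] with u hu
      simp [h, hu.2.not_ge]

/-- At scale `η`, the increments of `f` are those of its jumps up to an error `ε`, and two
jump times are at distance at least `η`. -/
structure IsModulus (f : ℝ → ℝ) (J : Finset ℝ) (ε η : ℝ) : Prop where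
  incr : ∀ u ∈ Icc (0:ℝ) 1, ∀ v ∈ Icc (0:ℝ) 1, u ≤ v → v - u < η →
    |f v - f u - ∑ r ∈ J with u < r ∧ r ≤ v, jump f r| ≤ ε
  gap : ∀ r ∈ J, ∀ r' ∈ J, r < r' → η ≤ r' - r

lemma exists_isModulus (hf : IsExcursion f) (hJ : IsJumpSet f J) {ε : ℝ} (hε : 0 < ε) :
    ∃ η > 0, IsModulus f J ε η := by
  have hc : ContinuousOn (fun u => f u - ∑ r ∈ J, if r ≤ u then jump f r else 0)
      (Icc (0:ℝ) 1) := fun t ht => (continuousAt_sub_jumps hf hJ ht).continuousWithinAt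
  have hu := isCompact_Icc.uniformContinuousOn_of_continuous hc
  rw [Metric.uniformContinuousOn_iff_le] at hu
  obtain ⟨η₁, hη₁, h₁⟩ := hu ε hε
  have hgap : ∀ᶠ η in 𝓝[>] (0:ℝ), ∀ r ∈ J, ∀ r' ∈ J, r < r' → η ≤ r' - r := by
    refine (Finset.eventually_all J).2 fun r _ => (Finset.eventually_all J).2 fun r' _ => ?_
    by_cases h : r < r'
    · filter_upwards [Ioo_mem_nhdsGT (sub_pos.2 h)] with η hη _ using hη.2.le
    · exact Eventually.of_forall fun _ h' => absurd h' h
  obtain ⟨η, hη, hη0, hηlt⟩ :=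
    (hgap.and (Ioo_mem_nhdsGT hη₁)).exists
  refine ⟨η, hη0, ⟨fun u hu v hv huv hlt => ?_, hη⟩⟩
  have := h₁ v hv u hu (by
    rw [Real.dist_eq, abs_of_nonneg (sub_nonneg.2 huv)]
    linarith)
  rw [Real.dist_eq] at this
  convert this using 2
  have hs : ∑ r ∈ J with u < r ∧ r ≤ v, jump f r
      = (∑ r ∈ J, if r ≤ v then jump f r else 0) - ∑ r ∈ J, if r ≤ u then jump f r else 0 := by
    rw [Finset.sum_filter, ← Finset.sum_sub_distrib]
    refine Finset.sum_congr rfl fun r _ => ?_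
    by_cases h1 : r ≤ u
    · simp [h1, h1.trans huv, h1.not_gt]
    · simp [h1, not_le.1 h1]
  rw [hs]
  ring

namespace IsModulus

variable {ε η : ℝ} {s s' t r : ℝ}

lemma sub_le (hM : IsModulus f J ε η) (hf : IsExcursion f) (hJ : IsJumpSet f J)
    (hs : s ∈ Icc (0:ℝ) 1) (ht : t ∈ Icc (0:ℝ) 1) (hst : s ≤ t) (h : t - s < η) :
    f s - ε ≤ f t := by
  have h1 := hM.incr s hs t ht hst h
  have h2 : 0 ≤ ∑ r ∈ J with s < r ∧ r ≤ t, jump f r :=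
    Finset.sum_nonneg fun r hr => hf.jump_nonneg r (hJ.1 r (Finset.mem_filter.1 hr).1)
  linarith [(abs_le.1 h1).1]

lemma eps_nonneg (hM : IsModulus f J ε η) (hη : 0 < η) : 0 ≤ ε :=
  (abs_nonneg _).trans (hM.incr 0 ⟨le_rfl, zero_le_one⟩ 0 ⟨le_rfl, zero_le_one⟩ le_rfl
    (by simpa using hη))

lemma infIcc_sub_le (hM : IsModulus f J ε η) (hf : IsExcursion f) (hJ : IsJumpSet f J)
    (hr : 0 ≤ r) (hrs : r ≤ s') (hs : s ≤ 1) (hss : s' ≤ s) (h : s - s' < η) :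
    infIcc f r s' - ε ≤ infIcc f r s := by
  have hε := hM.eps_nonneg (by linarith)
  refine le_infIcc (hrs.trans hss) fun u h1 h2 => ?_
  rcases le_total u s' with hu | hu
  · linarith [hf.infIcc_le h1 hu]
  · have := hM.sub_le hf hJ ⟨hr.trans hrs, hss.trans hs⟩ ⟨hr.trans h1, h2.trans hs⟩ hu
      (by linarith)
    linarith [hf.infIcc_le hrs (le_refl s')]

lemma xst_sub_le (hM : IsModulus f J ε η) (hf : IsExcursion f) (hJ : IsJumpSet f J)
    (hr : 0 ≤ r) (hrs : r ≤ s') (hs : s ≤ 1) (hss : s' ≤ s) (h : s - s' < η) :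
    xst f r s' - ε ≤ xst f r s := by
  have h1 := hM.infIcc_sub_le hf hJ hr hrs hs hss h
  have h0 := hM.eps_nonneg (by linarith)
  rw [xst_of_le hrs, xst_of_le (hrs.trans hss), sub_le_iff_le_add]
  refine max_le ?_ (by positivity)
  linarith [le_max_left (infIcc f r s - lm f r) 0]

lemma jump_sub_le_xst (hM : IsModulus f J ε η) (hf : IsExcursion f) (hJ : IsJumpSet f J)
    (hr : r ∈ Icc (0:ℝ) 1) (hs : s ≤ 1) (hrs : r ≤ s) (h : s - r < η) :
    jump f r - ε ≤ xst f r s := by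
  have := hM.xst_sub_le hf hJ hr.1 le_rfl hs hrs h
  rwa [xst_self (hf.jump_nonneg r hr)] at this

lemma abs_cdel_sub_le (hM : IsModulus f J ε η) (hf : IsExcursion f) (hJ : IsJumpSet f J)
    (hr : r ∈ Icc (0:ℝ) 1) (hs : s ≤ 1) (hss : s' ≤ s) (h : s - s' < η) {b : ℝ}
    (hb : 0 ≤ b) (hb' : b ≤ jump f r) :
    |cdel f r (xst f r s) b - cdel f r (xst f r s') b| ≤ ε := by
  have hη := hM.eps_nonneg (by linarith)
  unfold cdel
  rcases lt_or_ge s' r with h1 | h1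
  · rw [xst_of_lt h1]
    rcases lt_or_ge s r with h2 | h2
    · rw [xst_of_lt h2]
      simpa using hη
    · have h3 := hM.jump_sub_le_xst hf hJ hr hs h2 (by linarith)
      have h4 := hf.xst_le_jump hr s
      rcases le_total b (xst f r s) with h5 | h5
      · rw [abs_of_nonneg (sub_nonneg.2 h5), zero_sub, abs_neg, abs_of_nonneg hb, abs_le]
        constructor <;> grind
      · rw [abs_of_nonpos (sub_nonpos.2 h5), zero_sub, abs_neg, abs_of_nonneg hb, abs_le]
        constructor <;> grind
  · have h2 := hM.xst_sub_le hf hJ hr.1 h1 hs hss h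
    have h3 := hf.xst_anti h1 hss
    have h4 : |(|xst f r s - b| - |xst f r s' - b|)| ≤ ε := by
      refine (abs_abs_sub_abs_le_abs_sub _ _).trans ?_
      rw [abs_le]
      constructor <;> linarith
    rw [abs_le] at h4 ⊢
    constructor <;> grind

end IsModulus

/-- The height of `t` once the contribution of the jumps in `J` is removed. -/
def baseHeight (f : ℝ → ℝ) (J : Finset ℝ) (t : ℝ) : ℝ := f t - ∑ r ∈ J, xst f r t

/-- The height of the branch point of `s` and `t` once the contribution of the jumps in `J`
is removed. -/
def meetHeight (f : ℝ → ℝ) (J : Finset ℝ) (s t : ℝ) : ℝ :=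
  infIcc f (min s t) (max s t) - ∑ r ∈ J, min (xst f r s) (xst f r t)

lemma meetHeight_comm (s t : ℝ) : meetHeight f J s t = meetHeight f J t s := by
  simp only [meetHeight, min_comm, max_comm]

lemma dT_eq_heights (hf : IsExcursion f) (hJ : IsJumpSet f J) {s t : ℝ}
    (hs : s ∈ Icc (0:ℝ) 1) (ht : t ∈ Icc (0:ℝ) 1) :
    dT f s t = baseHeight f J s + baseHeight f J t - 2 * meetHeight f J s t := by
  have h : ∑ r ∈ J, |xst f r s - xst f r t|
      = ∑ r ∈ J, xst f r s + ∑ r ∈ J, xst f r t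
        - 2 * ∑ r ∈ J, min (xst f r s) (xst f r t) := by
    rw [Finset.mul_sum, ← Finset.sum_add_distrib, ← Finset.sum_sub_distrib]
    refine Finset.sum_congr rfl fun r _ => ?_
    rcases le_total (xst f r s) (xst f r t) with h | h
    · rw [min_eq_left h, abs_of_nonpos (sub_nonpos.2 h)]
      ring
    · rw [min_eq_right h, abs_of_nonneg (sub_nonneg.2 h)]
      ring
  rw [dT_eq_sum hf hJ hs ht, h]
  unfold baseHeight meetHeight
  ring

namespace IsModulus

variable {ε η : ℝ} {s s' t r : ℝ}

lemma abs_baseHeight_sub_le (hM : IsModulus f J ε η) (hf : IsExcursion f)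
    (hJ : IsJumpSet f J) (hs : s ∈ Icc (0:ℝ) 1) (hs' : s' ∈ Icc (0:ℝ) 1) (hss : s' ≤ s)
    (h : s - s' < η) :
    |baseHeight f J s - baseHeight f J s'| ≤ (J.card + 1) * ε := by
  have h1 := hM.incr s' hs' s hs hss h
  have hη := hM.eps_nonneg (by linarith)
  have h2 : |∑ r ∈ J, ((if s' < r ∧ r ≤ s then jump f r else 0)
      - (xst f r s - xst f r s'))| ≤ J.card * ε := by
    refine (Finset.abs_sum_le_sum_abs _ _).trans ?_
    rw [← nsmul_eq_mul]
    refine Finset.sum_le_card_nsmul _ _ _ fun r hr => ?_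
    have hr1 := hJ.1 r hr
    rcases lt_or_ge s' r with h3 | h3
    · rcases lt_or_ge s r with h4 | h4
      · simp [xst_of_lt h3, xst_of_lt h4, h4.not_ge, hη]
      · have h5 := hM.jump_sub_le_xst hf hJ hr1 hs.2 h4 (by linarith)
        have h6 := hf.xst_le_jump hr1 s
        rw [xst_of_lt h3, if_pos ⟨h3, h4⟩, abs_le]
        constructor <;> linarith
    · have h5 := hM.xst_sub_le hf hJ hr1.1 h3 hs.2 hss h
      have h6 := hf.xst_anti h3 hss
      rw [if_neg (fun h => h3.not_gt h.1), abs_le]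
      constructor <;> linarith
  rw [Finset.sum_sub_distrib, Finset.sum_sub_distrib, ← Finset.sum_filter] at h2
  have : baseHeight f J s - baseHeight f J s'
      = (f s - f s' - ∑ r ∈ J with s' < r ∧ r ≤ s, jump f r)
        + (∑ r ∈ J with s' < r ∧ r ≤ s, jump f r
          - (∑ r ∈ J, xst f r s - ∑ r ∈ J, xst f r s')) := by
    unfold baseHeight
    ring
  rw [this]
  refine (abs_add_le _ _).trans ?_
  linarith

lemma abs_meetHeight_sub_le_of_le_right (hM : IsModulus f J ε η) (hf : IsExcursion f)
    (hJ : IsJumpSet f J) (ht : 0 ≤ t) (hts : t ≤ s') (hs : s ≤ 1) (hss : s' ≤ s)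
    (h : s - s' < η) :
    |meetHeight f J s t - meetHeight f J s' t| ≤ (J.card + 1) * ε := by
  have hη := hM.eps_nonneg (by linarith)
  have h2 : |∑ r ∈ J, (min (xst f r s) (xst f r t) - min (xst f r s') (xst f r t))|
      ≤ J.card * ε := by
    refine (Finset.abs_sum_le_sum_abs _ _).trans ?_
    rw [← nsmul_eq_mul]
    refine Finset.sum_le_card_nsmul _ _ _ fun r hr => ?_
    have hr1 := hJ.1 r hr
    rcases lt_or_ge t r with h3 | h3
    · simp [xst_of_lt h3, xst_nonneg, hη]
    · rw [min_eq_left (hf.xst_anti h3 hts), min_eq_left (hf.xst_anti h3 (hts.trans hss))]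
      have h5 := hM.xst_sub_le hf hJ hr1.1 (h3.trans hts) hs hss h
      have h6 := hf.xst_anti (h3.trans hts) hss
      rw [abs_le]
      constructor <;> linarith
  rw [Finset.sum_sub_distrib] at h2
  have h3 := hM.infIcc_sub_le hf hJ ht hts hs hss h
  have h4 := hf.infIcc_anti hts le_rfl hss
  unfold meetHeight
  rw [min_eq_right hts, max_eq_left hts, min_eq_right (hts.trans hss),
    max_eq_left (hts.trans hss)]
  rw [abs_le] at h2 ⊢
  constructor <;> linarith

lemma abs_meetHeight_sub_le_of_le_left (hM : IsModulus f J ε η) (hf : IsExcursion f)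
    (hJ : IsJumpSet f J) (hs' : 0 ≤ s') (hss : s' ≤ s) (hst : s ≤ t) (ht : t ≤ 1)
    (h : s - s' < η) :
    |meetHeight f J s t - meetHeight f J s' t| ≤ 2 * ε := by
  have hη := hM.eps_nonneg (by linarith)
  have hs1 : s ∈ Icc (0:ℝ) 1 := ⟨hs'.trans hss, hst.trans ht⟩
  have hsum : ∑ r ∈ J, min (xst f r s) (xst f r t) - ∑ r ∈ J, min (xst f r s') (xst f r t)
      = ∑ r ∈ J with s' < r ∧ r ≤ s, xst f r t := by
    rw [← Finset.sum_sub_distrib, Finset.sum_filter]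
    refine Finset.sum_congr rfl fun r _ => ?_
    rcases lt_or_ge s' r with h3 | h3
    · rcases lt_or_ge s r with h4 | h4
      · simp [xst_of_lt h3, xst_of_lt h4, xst_nonneg, h4.not_ge]
      · simp [xst_of_lt h3, h3, h4, min_eq_right (hf.xst_anti h4 hst), xst_nonneg]
    · simp [min_eq_right (hf.xst_anti (h3.trans hss) hst),
        min_eq_right (hf.xst_anti h3 (hss.trans hst)), h3.not_gt]
  have key : |infIcc f s t - infIcc f s' t - ∑ r ∈ J with s' < r ∧ r ≤ s, xst f r t|
      ≤ 2 * ε := by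
    have hanti := hf.infIcc_anti hst hss le_rfl
    have hfs := hf.infIcc_le (le_refl s) hst
    have hnear : ∀ u, s' ≤ u → u ≤ s → (∀ r ∈ J, u < r → ¬ r ≤ s) →
        infIcc f s t - ε ≤ f u := by
      intro u h1 h2 h3
      have := hM.incr u ⟨hs'.trans h1, h2.trans hs1.2⟩ s hs1 h2 (by linarith)
      rw [Finset.filter_false_of_mem (fun r hr hr' => h3 r hr hr'.1 hr'.2),
        Finset.sum_empty, sub_zero, abs_le] at this
      linarith
    by_cases hr : ∃ r ∈ J, s' < r ∧ r ≤ s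
    · obtain ⟨r, hrJ, h1, h2⟩ := hr
      have huniq : ∀ r' ∈ J, s' < r' → r' ≤ s → r' = r := by
        intro r' hr' h3 h4
        by_contra hne
        rcases lt_or_gt_of_ne hne with h5 | h5
        · linarith [hM.gap r' hr' r hrJ h5]
        · linarith [hM.gap r hrJ r' hr' h5]
      have hfil : (J.filter fun r => s' < r ∧ r ≤ s) = {r} := by
        ext r'
        simp only [Finset.mem_filter, Finset.mem_singleton]
        exact ⟨fun h => huniq r' h.1 h.2.1 h.2.2, by rintro rfl; exact ⟨hrJ, h1, h2⟩⟩
      rw [hfil, Finset.sum_singleton, xst_of_le (h2.trans hst)]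
      have hleft : ∀ u, s' ≤ u → u < r → |lm f r - f u| ≤ ε := by
        intro u h3 h4
        have := hM.incr u ⟨hs'.trans h3, h4.le.trans (hJ.1 r hrJ).2⟩ r (hJ.1 r hrJ) h4.le
          (by linarith)
        have hfil' : (J.filter fun r' => u < r' ∧ r' ≤ r) = {r} := by
          ext r'
          simp only [Finset.mem_filter, Finset.mem_singleton]
          exact ⟨fun h => huniq r' h.1 (h3.trans_lt h.2.1) (h.2.2.trans h2),
            by rintro rfl; exact ⟨hrJ, h4, le_rfl⟩⟩
        rw [hfil', Finset.sum_singleton, jump] at this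
        rw [abs_le] at this ⊢
        constructor <;> linarith
      have hmid : ∀ u, r ≤ u → u ≤ s → infIcc f s t - ε ≤ f u := fun u h3 h4 =>
        hnear u (h1.le.trans h3) h4 fun r' hr' h5 h6 =>
          (h3.trans_lt h5).ne' (huniq r' hr' (h1.trans_le (h3.trans h5.le)) h6)
      have hI1 : infIcc f r t ≤ infIcc f s t := hf.infIcc_anti hst h2 le_rfl
      have hI2 : infIcc f s t - ε ≤ infIcc f r t := by
        refine le_infIcc (h2.trans hst) fun u h3 h4 => ?_
        rcases le_total u s with h5 | h5
        · exact hmid u h3 h5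
        · linarith [hf.infIcc_le h5 h4]
      have hI3 : infIcc f s' t ≤ infIcc f r t :=
        hf.infIcc_anti (h2.trans hst) h1.le le_rfl
      have hI4 : infIcc f s' t ≤ lm f r + ε := by
        have h3 := hleft s' le_rfl h1
        rw [abs_le] at h3
        linarith [hf.infIcc_le (le_refl s') (hss.trans hst)]
      have hI5 : min (lm f r) (infIcc f s t) - ε ≤ infIcc f s' t := by
        refine le_infIcc (hss.trans hst) fun u h3 h4 => ?_
        rcases lt_or_ge u r with h5 | h5
        · have := (abs_le.1 (hleft u h3 h5)).2
          linarith [min_le_left (lm f r) (infIcc f s t)]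
        · rcases le_total u s with h6 | h6
          · linarith [hmid u h5 h6, min_le_right (lm f r) (infIcc f s t)]
          · linarith [hf.infIcc_le h6 h4, min_le_right (lm f r) (infIcc f s t)]
      rw [abs_le]
      rcases le_total (infIcc f r t) (lm f r) with h5 | h5
      · rw [max_eq_right (by linarith)]
        have := le_min h5 (hI1)
        have h6 : infIcc f s t - ε ≤ min (lm f r) (infIcc f s t) :=
          le_min (by linarith) (by linarith)
        constructor <;> linarith
      · rw [max_eq_left (by linarith)]
        rw [min_eq_left (by linarith)] at hI5
        constructor <;> linarith
    · push Not at hr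
      rw [Finset.filter_false_of_mem (fun r hr1 hr2 => (hr r hr1 hr2.1).not_ge hr2.2),
        Finset.sum_empty, sub_zero, abs_le]
      have : infIcc f s t - ε ≤ infIcc f s' t := by
        refine le_infIcc (hss.trans hst) fun u h3 h4 => ?_
        rcases le_total u s with h5 | h5
        · exact hnear u h3 h5 fun r hr1 hr2 => (hr r hr1 (h3.trans_lt hr2)).not_ge
        · linarith [hf.infIcc_le h5 h4]
      constructor <;> linarith
  unfold meetHeight
  rw [min_eq_left hst, max_eq_right hst, min_eq_left (hss.trans hst),
    max_eq_right (hss.trans hst)]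
  rw [abs_le] at key ⊢
  constructor <;> linarith

lemma abs_meetHeight_sub_le (hM : IsModulus f J ε η) (hf : IsExcursion f)
    (hJ : IsJumpSet f J) (hs : s ∈ Icc (0:ℝ) 1) (hs' : s' ∈ Icc (0:ℝ) 1)
    (ht : t ∈ Icc (0:ℝ) 1) (hss : s' ≤ s) (h : s - s' < η) :
    |meetHeight f J s t - meetHeight f J s' t| ≤ (J.card + 3) * ε := by
  have hη := hM.eps_nonneg (by linarith)
  have hc : 0 ≤ J.card * ε := by positivity
  rcases le_total t s' with h1 | h1
  · linarith [hM.abs_meetHeight_sub_le_of_le_right hf hJ ht.1 h1 hs.2 hss h]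
  rcases le_total s t with h2 | h2
  · linarith [hM.abs_meetHeight_sub_le_of_le_left hf hJ hs'.1 hss h2 ht.2 h]
  have h3 := hM.abs_meetHeight_sub_le_of_le_right hf hJ ht.1 le_rfl hs.2 h2 (by linarith)
  have h4 := hM.abs_meetHeight_sub_le_of_le_left hf hJ hs'.1 h1 le_rfl ht.2 (by linarith)
  linarith [abs_sub_le (meetHeight f J s t) (meetHeight f J t t) (meetHeight f J s' t)]

lemma abs_dL_sub_le_left (hM : IsModulus f J ε η) (hf : IsExcursion f)
    (hJ : IsJumpSet f J) (hs : s ∈ Icc (0:ℝ) 1) (hs' : s' ∈ Icc (0:ℝ) 1)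
    (ht : t ∈ Icc (0:ℝ) 1) (h : |s - s'| < η) :
    |dL f s t - dL f s' t| ≤ J.card * ε := by
  wlog hss : s' ≤ s generalizing s s'
  · rw [abs_sub_comm]
    exact this hs' hs (by rwa [abs_sub_comm]) (le_of_not_ge hss)
  rw [abs_of_nonneg (sub_nonneg.2 hss)] at h
  rw [dL_eq_sum hf hJ hs ht, dL_eq_sum hf hJ hs' ht, ← Finset.sum_sub_distrib]
  refine (Finset.abs_sum_le_sum_abs _ _).trans ?_
  rw [← nsmul_eq_mul]
  exact Finset.sum_le_card_nsmul _ _ _ fun r hr => hM.abs_cdel_sub_le hf hJ (hJ.1 r hr) hs.2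
    hss h (xst_nonneg _ _) (hf.xst_le_jump (hJ.1 r hr) t)

lemma abs_dT_sub_le_left (hM : IsModulus f J ε η) (hf : IsExcursion f)
    (hJ : IsJumpSet f J) (hs : s ∈ Icc (0:ℝ) 1) (hs' : s' ∈ Icc (0:ℝ) 1)
    (ht : t ∈ Icc (0:ℝ) 1) (h : |s - s'| < η) :
    |dT f s t - dT f s' t| ≤ (3 * J.card + 7) * ε := by
  wlog hss : s' ≤ s generalizing s s'
  · rw [abs_sub_comm]
    exact this hs' hs (by rwa [abs_sub_comm]) (le_of_not_ge hss)
  rw [abs_of_nonneg (sub_nonneg.2 hss)] at h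
  have h1 := hM.abs_baseHeight_sub_le hf hJ hs hs' hss h
  have h2 := hM.abs_meetHeight_sub_le hf hJ hs hs' ht hss h
  rw [dT_eq_heights hf hJ hs ht, dT_eq_heights hf hJ hs' ht]
  rw [abs_le] at h1 h2 ⊢
  constructor <;> linarith

end IsModulus

lemma dL_comm (hf : IsExcursion f) (hJ : IsJumpSet f J) {s t : ℝ} (hs : s ∈ Icc (0:ℝ) 1)
    (ht : t ∈ Icc (0:ℝ) 1) : dL f s t = dL f t s := by
  rw [dL_eq_sum hf hJ hs ht, dL_eq_sum hf hJ ht hs]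
  exact Finset.sum_congr rfl fun r _ => cdel_comm _ _ _

lemma dT_comm (hf : IsExcursion f) (hJ : IsJumpSet f J) {s t : ℝ} (hs : s ∈ Icc (0:ℝ) 1)
    (ht : t ∈ Icc (0:ℝ) 1) : dT f s t = dT f t s := by
  rw [dT_eq_heights hf hJ hs ht, dT_eq_heights hf hJ ht hs, meetHeight_comm]
  ring

end Modulus

section Comparison

variable {f g l : ℝ → ℝ} {c : ℝ}

lemma IncBij.mem (hl : IncBij l) {x : ℝ} (hx : x ∈ Icc (0:ℝ) 1) : l x ∈ Icc (0:ℝ) 1 :=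
  hl.2.1 hx

lemma IncBij.le_iff (hl : IncBij l) {x y : ℝ} (hx : x ∈ Icc (0:ℝ) 1)
    (hy : y ∈ Icc (0:ℝ) 1) : l x ≤ l y ↔ x ≤ y := hl.1.le_iff_le hx hy

lemma IncBij.lt_iff (hl : IncBij l) {x y : ℝ} (hx : x ∈ Icc (0:ℝ) 1)
    (hy : y ∈ Icc (0:ℝ) 1) : l x < l y ↔ x < y := hl.1.lt_iff_lt hx hy

lemma IncBij.exists_eq (hl : IncBij l) {y : ℝ} (hy : y ∈ Icc (0:ℝ) 1) :
    ∃ x ∈ Icc (0:ℝ) 1, l x = y := hl.2.2.2 hy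

lemma IncBij.map_zero (hl : IncBij l) : l 0 = 0 := by
  obtain ⟨x, hx, h⟩ := hl.exists_eq (y := 0) ⟨le_rfl, zero_le_one⟩
  have h0 : (0:ℝ) ∈ Icc (0:ℝ) 1 := ⟨le_rfl, zero_le_one⟩
  exact le_antisymm (h ▸ (hl.le_iff h0 hx).2 hx.1) (hl.mem h0).1

lemma IncBij.abs_infIcc_sub_le (hl : IncBij l) (hf : IsExcursion f) (hg : IsExcursion g)
    (h : ∀ x ∈ Icc (0:ℝ) 1, |g x - f (l x)| ≤ c) {r t : ℝ} (hr : r ∈ Icc (0:ℝ) 1)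
    (ht : t ∈ Icc (0:ℝ) 1) (hrt : r ≤ t) :
    |infIcc g r t - infIcc f (l r) (l t)| ≤ c := by
  have h1 : infIcc g r t - c ≤ infIcc f (l r) (l t) := by
    refine le_infIcc ((hl.le_iff hr ht).2 hrt) fun u hu1 hu2 => ?_
    obtain ⟨x, hx, rfl⟩ := hl.exists_eq ⟨(hl.mem hr).1.trans hu1, hu2.trans (hl.mem ht).2⟩
    have := (abs_le.1 (h x hx)).2
    linarith [hg.infIcc_le ((hl.le_iff hr hx).1 hu1) ((hl.le_iff hx ht).1 hu2)]
  have h2 : infIcc f (l r) (l t) - c ≤ infIcc g r t := by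
    refine le_infIcc hrt fun u hu1 hu2 => ?_
    have hu : u ∈ Icc (0:ℝ) 1 := ⟨hr.1.trans hu1, hu2.trans ht.2⟩
    have := (abs_le.1 (h u hu)).1
    linarith [hf.infIcc_le ((hl.le_iff hr hu).2 hu1) ((hl.le_iff hu ht).2 hu2)]
  rw [abs_le]
  constructor <;> linarith

lemma IncBij.tendsto_left (hl : IncBij l) {r : ℝ} (hr : r ∈ Ioc (0:ℝ) 1) :
    Tendsto l (𝓝[<] r) (𝓝[<] (l r)) := by
  have hr1 : r ∈ Icc (0:ℝ) 1 := ⟨hr.1.le, hr.2⟩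
  have h0 : (0:ℝ) ∈ Icc (0:ℝ) 1 := ⟨le_rfl, zero_le_one⟩
  have hpos : 0 < l r := by
    rw [← hl.map_zero]
    exact (hl.lt_iff h0 hr1).2 hr.1
  intro S hS
  obtain ⟨v, hv, hvS⟩ := (mem_nhdsLT_iff_exists_Ioo_subset).1 hS
  obtain ⟨u, hu, huv⟩ := hl.exists_eq (y := max v 0)
    ⟨le_max_right _ _, max_le (hv.le.trans (hl.mem hr1).2) zero_le_one⟩
  have hur : u < r := by
    rw [← hl.lt_iff hu hr1, huv]
    exact max_lt hv hpos
  refine mem_map.2 (mem_of_superset (Ioo_mem_nhdsLT hur) fun w hw => hvS ?_)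
  have hw1 : w ∈ Icc (0:ℝ) 1 := ⟨hu.1.trans hw.1.le, hw.2.le.trans hr.2⟩
  refine ⟨?_, (hl.lt_iff hw1 hr1).2 hw.2⟩
  calc v ≤ l u := huv ▸ le_max_left _ _
    _ < l w := (hl.lt_iff hu hw1).2 hw.1

lemma IncBij.abs_lm_sub_le (hl : IncBij l) (hf : IsExcursion f) (hg : IsExcursion g)
    (h : ∀ x ∈ Icc (0:ℝ) 1, |g x - f (l x)| ≤ c) {r : ℝ} (hr : r ∈ Icc (0:ℝ) 1) :
    |lm g r - lm f (l r)| ≤ c := by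
  rcases hr.1.eq_or_lt with h0 | h0
  · rw [← h0, hl.map_zero, lm_zero, lm_zero, sub_zero, abs_zero]
    exact (abs_nonneg _).trans (h r hr)
  · have h1 := ((hg.tendsto_lm r).sub
      ((hf.tendsto_lm (l r)).comp (hl.tendsto_left ⟨h0, hr.2⟩))).abs
    refine le_of_tendsto h1 ?_
    filter_upwards [Ioo_mem_nhdsLT h0] with u hu
    exact h u ⟨hu.1.le, hu.2.le.trans hr.2⟩

lemma IncBij.abs_jump_sub_le (hl : IncBij l) (hf : IsExcursion f) (hg : IsExcursion g)
    (h : ∀ x ∈ Icc (0:ℝ) 1, |g x - f (l x)| ≤ c) {r : ℝ} (hr : r ∈ Icc (0:ℝ) 1) :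
    |jump g r - jump f (l r)| ≤ 2 * c := by
  have h1 := hl.abs_lm_sub_le hf hg h hr
  have h2 := h r hr
  unfold jump
  rw [abs_le] at h1 h2 ⊢
  constructor <;> linarith

lemma IncBij.abs_xst_sub_le (hl : IncBij l) (hf : IsExcursion f) (hg : IsExcursion g)
    (h : ∀ x ∈ Icc (0:ℝ) 1, |g x - f (l x)| ≤ c) {r t : ℝ} (hr : r ∈ Icc (0:ℝ) 1)
    (ht : t ∈ Icc (0:ℝ) 1) :
    |xst g r t - xst f (l r) (l t)| ≤ 2 * c := by
  have h1 := hl.abs_lm_sub_le hf hg h hr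
  rcases lt_or_ge t r with h3 | h3
  · rw [xst_of_lt h3, xst_of_lt ((hl.lt_iff ht hr).2 h3), sub_zero, abs_zero]
    linarith [abs_nonneg (lm g r - lm f (l r))]
  · have h2 := hl.abs_infIcc_sub_le hf hg h hr ht h3
    rw [xst_of_le h3, xst_of_le ((hl.le_iff hr ht).2 h3)]
    refine (abs_max_sub_max_le_abs _ _ _).trans ?_
    rw [abs_le] at h1 h2 ⊢
    constructor <;> linarith

lemma IncBij.abs_abs_xst_sub_le (hl : IncBij l) (hf : IsExcursion f) (hg : IsExcursion g)
    (h : ∀ x ∈ Icc (0:ℝ) 1, |g x - f (l x)| ≤ c) {r s t : ℝ} (hr : r ∈ Icc (0:ℝ) 1)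
    (hs : s ∈ Icc (0:ℝ) 1) (ht : t ∈ Icc (0:ℝ) 1) :
    |(|xst g r s - xst g r t| - |xst f (l r) (l s) - xst f (l r) (l t)|)| ≤ 4 * c := by
  have h1 := hl.abs_xst_sub_le hf hg h hr hs
  have h2 := hl.abs_xst_sub_le hf hg h hr ht
  refine (abs_abs_sub_abs_le_abs_sub _ _).trans ?_
  rw [abs_le] at h1 h2 ⊢
  constructor <;> linarith

lemma IncBij.abs_cdel_sub_le (hl : IncBij l) (hf : IsExcursion f) (hg : IsExcursion g)
    (h : ∀ x ∈ Icc (0:ℝ) 1, |g x - f (l x)| ≤ c) {r s t : ℝ} (hr : r ∈ Icc (0:ℝ) 1)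
    (hs : s ∈ Icc (0:ℝ) 1) (ht : t ∈ Icc (0:ℝ) 1) :
    |cdel g r (xst g r s) (xst g r t) - cdel f (l r) (xst f (l r) (l s)) (xst f (l r) (l t))|
      ≤ 6 * c := by
  have h1 := hl.abs_abs_xst_sub_le hf hg h hr hs ht
  have h2 := hl.abs_jump_sub_le hf hg h hr
  have hc : 0 ≤ c := (abs_nonneg _).trans (h r hr)
  refine (abs_min_sub_min_le_max _ _ _ _).trans (max_le (h1.trans (by linarith)) ?_)
  rw [abs_le] at h1 h2 ⊢
  constructor <;> linarith

lemma IncBij.exists_common_jumpSet (hl : IncBij l) {Jf Jg : Finset ℝ}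
    (hJf : IsJumpSet f Jf) (hJg : IsJumpSet g Jg) :
    ∃ K : Finset ℝ, K.card ≤ Jg.card + Jf.card ∧ IsJumpSet g K ∧ IsJumpSet f (K.image l) := by
  have hinv := hl.2.invOn_invFunOn
  set k := Function.invFunOn l (Icc (0:ℝ) 1)
  have hk : ∀ y ∈ Icc (0:ℝ) 1, k y ∈ Icc (0:ℝ) 1 := fun y hy =>
    Function.invFunOn_mem (hl.exists_eq hy)
  have hmem : ∀ r ∈ Jg ∪ Jf.image k, r ∈ Icc (0:ℝ) 1 := by
    intro r hr
    rcases Finset.mem_union.1 hr with h | h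
    · exact hJg.1 r h
    · obtain ⟨y, hy, rfl⟩ := Finset.mem_image.1 h
      exact hk y (hJf.1 y hy)
  refine ⟨Jg ∪ Jf.image k, (Finset.card_union_le _ _).trans
    (Nat.add_le_add_left Finset.card_image_le _), ⟨hmem, fun t ht h => ?_⟩,
    ⟨fun r hr => ?_, fun t ht h => ?_⟩⟩
  · exact Finset.mem_union_left _ (hJg.2 t ht h)
  · obtain ⟨y, hy, rfl⟩ := Finset.mem_image.1 hr
    exact hl.mem (hmem y hy)
  · exact Finset.mem_image.2 ⟨k t, Finset.mem_union_right _
      (Finset.mem_image_of_mem _ (hJf.2 t ht h)), hinv.2 ht⟩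

lemma IncBij.sum_image (hl : IncBij l) {K : Finset ℝ} (hK : ∀ r ∈ K, r ∈ Icc (0:ℝ) 1)
    (φ : ℝ → ℝ) : ∑ r ∈ K.image l, φ r = ∑ r ∈ K, φ (l r) :=
  Finset.sum_image fun r hr r' hr' h => hl.2.2.1 (hK r hr) (hK r' hr') h

lemma IncBij.abs_dL_sub_le (hl : IncBij l) (hf : IsExcursion f) (hg : IsExcursion g)
    (h : ∀ x ∈ Icc (0:ℝ) 1, |g x - f (l x)| ≤ c) {K : Finset ℝ} (hK : IsJumpSet g K)
    (hK' : IsJumpSet f (K.image l)) {s t : ℝ} (hs : s ∈ Icc (0:ℝ) 1)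
    (ht : t ∈ Icc (0:ℝ) 1) :
    |dL g s t - dL f (l s) (l t)| ≤ K.card * (6 * c) := by
  rw [dL_eq_sum hg hK hs ht, dL_eq_sum hf hK' (hl.mem hs) (hl.mem ht), hl.sum_image hK.1,
    ← Finset.sum_sub_distrib]
  refine (Finset.abs_sum_le_sum_abs _ _).trans ?_
  rw [← nsmul_eq_mul]
  exact Finset.sum_le_card_nsmul _ _ _ fun r hr =>
    hl.abs_cdel_sub_le hf hg h (hK.1 r hr) hs ht

lemma IncBij.abs_dT_sub_le (hl : IncBij l) (hf : IsExcursion f) (hg : IsExcursion g)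
    (h : ∀ x ∈ Icc (0:ℝ) 1, |g x - f (l x)| ≤ c) {K : Finset ℝ} (hK : IsJumpSet g K)
    (hK' : IsJumpSet f (K.image l)) {s t : ℝ} (hs : s ∈ Icc (0:ℝ) 1)
    (ht : t ∈ Icc (0:ℝ) 1) :
    |dT g s t - dT f (l s) (l t)| ≤ 4 * c + K.card * (4 * c) := by
  have hmin : l (min s t) = min (l s) (l t) := hl.1.monotoneOn.map_min hs ht
  have hmax : l (max s t) = max (l s) (l t) := hl.1.monotoneOn.map_max hs ht
  have h1 := hl.abs_infIcc_sub_le hf hg h (r := min s t) (t := max s t)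
    ⟨le_min hs.1 ht.1, (min_le_left _ _).trans hs.2⟩
    ⟨hs.1.trans (le_max_left _ _), max_le hs.2 ht.2⟩ min_le_max
  rw [hmin, hmax] at h1
  have h2 : |∑ r ∈ K, (|xst g r s - xst g r t| - |xst f (l r) (l s) - xst f (l r) (l t)|)|
      ≤ K.card * (4 * c) := by
    refine (Finset.abs_sum_le_sum_abs _ _).trans ?_
    rw [← nsmul_eq_mul]
    exact Finset.sum_le_card_nsmul _ _ _ fun r hr =>
      hl.abs_abs_xst_sub_le hf hg h (hK.1 r hr) hs ht
  rw [Finset.sum_sub_distrib] at h2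
  have h3 := h s hs
  have h4 := h t ht
  rw [dT_eq_sum hg hK hs ht, dT_eq_sum hf hK' (hl.mem hs) (hl.mem ht), hl.sum_image hK.1]
  rw [abs_le] at h1 h2 h3 h4 ⊢
  constructor <;> linarith

end Comparison

section Convergence

variable {f g : ℝ → ℝ}

lemma IsExcursion.exists_bound (hf : IsExcursion f) :
    ∃ B, ∀ x ∈ Icc (0:ℝ) 1, f x ≤ B := by
  have h : BddAbove (f '' Icc (0:ℝ) 1) := by
    refine isCompact_Icc.induction_on (p := fun S => BddAbove (f '' S)) (by simp)
      (fun S T hST hT => hT.mono (image_mono hST))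
      (fun S T hS hT => by
        rw [image_union]
        exact hS.union hT) fun t _ => ?_
    have h1 : ∀ᶠ u in 𝓝[<] t, f u ≤ max (lm f t) (f t) + 1 :=
      (hf.tendsto_lm t).eventually (ge_mem_nhds (by linarith [le_max_left (lm f t) (f t)]))
    have h2 : ∀ᶠ u in 𝓝[>] t, f u ≤ max (lm f t) (f t) + 1 :=
      (hf.tendsto_right t).eventually (ge_mem_nhds (by linarith [le_max_right (lm f t) (f t)]))
    have h3 : ∀ᶠ u in 𝓝[≠] t, f u ≤ max (lm f t) (f t) + 1 := by
      rw [← nhdsLT_sup_nhdsGT]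
      exact eventually_sup.2 ⟨h1, h2⟩
    have h4 : ∀ᶠ u in 𝓝 t, f u ≤ max (lm f t) (f t) + 1 := by
      filter_upwards [eventually_nhdsWithin_iff.1 h3] with u hu
      by_cases hut : u = t
      · rw [hut]
        linarith [le_max_right (lm f t) (f t)]
      · exact hu hut
    refine ⟨_, mem_nhdsWithin_of_mem_nhds h4, max (lm f t) (f t) + 1, ?_⟩
    rintro _ ⟨u, hu, rfl⟩
    exact hu
  obtain ⟨B, hB⟩ := h
  exact ⟨B, fun x hx => hB ⟨x, hx, rfl⟩⟩

lemma exists_incBij_of_skor_lt (hf : IsExcursion f) (hg : IsExcursion g) {κ : ℝ}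
    (h : skor g f < κ) :
    ∃ c, 0 ≤ c ∧ c < κ ∧ ∃ l : ℝ → ℝ, IncBij l ∧
      ∀ x ∈ Icc (0:ℝ) 1, |l x - x| ≤ c ∧ |g x - f (l x)| ≤ c := by
  have hne : {c : ℝ | 0 ≤ c ∧ ∃ l : ℝ → ℝ, IncBij l ∧
      ∀ x ∈ Icc (0:ℝ) 1, |l x - x| ≤ c ∧ |g x - f (l x)| ≤ c}.Nonempty := by
    obtain ⟨B, hB⟩ := hf.exists_bound
    obtain ⟨C, hC⟩ := hg.exists_bound
    refine ⟨|B| + |C|, by positivity, id, ⟨strictMonoOn_id, bijOn_id _⟩, fun x hx => ?_⟩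
    refine ⟨by simp only [id, sub_self, abs_zero]; positivity, ?_⟩
    have h1 := (hB x hx).trans (le_abs_self B)
    have h2 := (hC x hx).trans (le_abs_self C)
    have h3 := hf.nonneg' x
    have h4 := hg.nonneg' x
    rw [id, abs_le]
    constructor <;> linarith [abs_nonneg B, abs_nonneg C]
  obtain ⟨c, ⟨hc, hl⟩, hcκ⟩ := exists_lt_of_csInf_lt hne h
  exact ⟨c, hc, hcκ, hl⟩

lemma exists_isJumpSet_of_card_le {N : ℕ} {s : Finset ℝ}
    (hs : s.card ≤ N) (h : ∀ t ∈ Icc (0:ℝ) 1, 0 < jump f t → t ∈ s) :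
    ∃ J : Finset ℝ, J.card ≤ N ∧ IsJumpSet f J :=
  ⟨s.filter (· ∈ Icc (0:ℝ) 1), (Finset.card_filter_le _ _).trans hs,
    fun _ hr => (Finset.mem_filter.1 hr).2,
    fun t ht hj => Finset.mem_filter.2 ⟨h t ht hj, ht⟩⟩

lemma exists_isJumpSet_of_tendsto (hf : IsExcursion f) {F : ℕ → ℝ → ℝ}
    (hF : ∀ n, IsExcursion (F n)) (hconv : Tendsto (fun n => skor (F n) f) atTop (𝓝 0))
    {N : ℕ} (hJ : ∀ n, ∃ J : Finset ℝ, J.card ≤ N ∧ IsJumpSet (F n) J) :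
    ∃ J : Finset ℝ, IsJumpSet f J := by
  by_cases hfin : {t | t ∈ Icc (0:ℝ) 1 ∧ 0 < jump f t}.Finite
  · exact ⟨hfin.toFinset, fun r hr => (hfin.mem_toFinset.1 hr).1,
      fun t ht h => hfin.mem_toFinset.2 ⟨ht, h⟩⟩
  obtain ⟨T, hT, hTcard⟩ := Set.Infinite.exists_subset_card_eq hfin (N + 1)
  exfalso
  have hev : ∀ᶠ κ in 𝓝[>] (0:ℝ), ∀ r ∈ T, 2 * κ < jump f r := by
    refine (Finset.eventually_all T).2 fun r hr => ?_
    have : 0 < jump f r / 2 := half_pos (hT hr).2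
    filter_upwards [Ioo_mem_nhdsGT this] with κ hκ
    linarith [hκ.2]
  obtain ⟨κ, hκ, hκ0⟩ := (hev.and self_mem_nhdsWithin).exists
  obtain ⟨n, hn⟩ := (hconv.eventually (gt_mem_nhds (show (0:ℝ) < κ from hκ0))).exists
  obtain ⟨c, hc0, hc, l, hl, h⟩ := exists_incBij_of_skor_lt hf (hF n) hn
  obtain ⟨J, hJN, hJ⟩ := hJ n
  have hsub : T ⊆ J.image l := by
    intro r hr
    obtain ⟨x, hx, rfl⟩ := hl.exists_eq (hT hr).1
    refine Finset.mem_image_of_mem _ (hJ.2 x hx ?_)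
    have h1 := hl.abs_jump_sub_le hf (hF n) (fun x hx => (h x hx).2) hx
    linarith [(abs_le.1 h1).1, hκ _ hr]
  have := (Finset.card_le_card hsub).trans Finset.card_image_le
  omega

lemma exists_skor_lt_imp_close (hf : IsExcursion f) {J : Finset ℝ} (hJ : IsJumpSet f J)
    (N : ℕ) {ε : ℝ} (hε : 0 < ε) :
    ∃ κ > 0, ∀ g : ℝ → ℝ, IsExcursion g → (∃ K : Finset ℝ, K.card ≤ N ∧ IsJumpSet g K) →
      skor g f < κ → ∀ s ∈ Icc (0:ℝ) 1, ∀ t ∈ Icc (0:ℝ) 1,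
        |dL g s t - dL f s t| < ε ∧ |dT g s t - dT f s t| < ε := by
  set A : ℝ := N + J.card with hA
  have hA0 : 0 ≤ A := by positivity
  obtain ⟨η, hη, hM⟩ := exists_isModulus hf hJ
    (show 0 < ε / (2 * (2 * (3 * (J.card : ℝ) + 7))) by positivity)
  refine ⟨min η (ε / (2 * (6 * A + 4))), by positivity, fun g hg hK hlt s hs t ht => ?_⟩
  obtain ⟨c, hc0, hc, l, hl, h⟩ := exists_incBij_of_skor_lt hf hg hlt
  obtain ⟨Jg, hJgN, hJg⟩ := hK
  obtain ⟨K, hKcard, hKg, hKf⟩ := hl.exists_common_jumpSet hJ hJg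
  have hKA : (K.card : ℝ) ≤ A := by
    have : K.card ≤ N + J.card := hKcard.trans (by gcongr)
    rw [hA]
    exact_mod_cast this
  have hg' : ∀ x ∈ Icc (0:ℝ) 1, |g x - f (l x)| ≤ c := fun x hx => (h x hx).2
  have hcη : c < η := hc.trans_le (min_le_left _ _)
  have hcA : (6 * A + 4) * c < ε / 2 := by
    have h1 : c < ε / (2 * (6 * A + 4)) := hc.trans_le (min_le_right _ _)
    rw [lt_div_iff₀ (by positivity)] at h1
    linarith
  have hKc : K.card * c ≤ A * c := by gcongr
  have hs' := hl.mem hs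
  have ht' := hl.mem ht
  have hsd : |l s - s| < η := (h s hs).1.trans_lt hcη
  have htd : |l t - t| < η := (h t ht).1.trans_lt hcη
  set δ := ε / (2 * (2 * (3 * (J.card : ℝ) + 7))) with hδ
  have hδ0 : 0 < δ := by positivity
  have hδε : 2 * ((3 * (J.card : ℝ) + 7) * δ) = ε / 2 := by
    rw [hδ]
    field_simp
  have hBδ : 0 ≤ J.card * δ := by positivity
  constructor
  · have h1 := hl.abs_dL_sub_le hf hg hg' hKg hKf hs ht
    have h2 := hM.abs_dL_sub_le_left hf hJ hs' hs ht' hsd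
    have h3 := hM.abs_dL_sub_le_left hf hJ ht' ht hs htd
    rw [dL_comm hf hJ ht' hs, dL_comm hf hJ ht hs] at h3
    have h4 := abs_sub_le (dL g s t) (dL f (l s) (l t)) (dL f s t)
    have h5 := abs_sub_le (dL f (l s) (l t)) (dL f s (l t)) (dL f s t)
    linarith
  · have h1 := hl.abs_dT_sub_le hf hg hg' hKg hKf hs ht
    have h2 := hM.abs_dT_sub_le_left hf hJ hs' hs ht' hsd
    have h3 := hM.abs_dT_sub_le_left hf hJ ht' ht hs htd
    rw [dT_comm hf hJ ht' hs, dT_comm hf hJ ht hs] at h3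
    have h4 := abs_sub_le (dT g s t) (dT f (l s) (l t)) (dT f s t)
    have h5 := abs_sub_le (dT f (l s) (l t)) (dT f s (l t)) (dT f s t)
    have h6 : 0 ≤ A * c := by positivity
    linarith

end Convergence

theorem statement16 (f : ℝ → ℝ) (hf : IsExcursion f) (F : ℕ → ℝ → ℝ)
    (hF : ∀ n, IsExcursion (F n))
    (hconv : Tendsto (fun n => skor (F n) f) atTop (𝓝 0))
    (N : ℕ) (hN : 1 ≤ N)
    (hjumps : ∀ n, ∃ s : Finset ℝ, s.card ≤ N ∧
        ∀ t ∈ Icc (0:ℝ) 1, 0 < jump (F n) t → t ∈ s) :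
    TendstoUniformlyOn (fun n (p : ℝ × ℝ) => dL (F n) p.1 p.2)
        (fun p => dL f p.1 p.2) atTop (Icc (0:ℝ) 1 ×ˢ Icc (0:ℝ) 1) ∧
    TendstoUniformlyOn (fun n (p : ℝ × ℝ) => dT (F n) p.1 p.2)
        (fun p => dT f p.1 p.2) atTop (Icc (0:ℝ) 1 ×ˢ Icc (0:ℝ) 1) ∧
    TendstoUniformlyOn (fun n (p : ℝ × ℝ) => dV (F n) p.1 p.2)
        (fun p => dV f p.1 p.2) atTop (Icc (0:ℝ) 1 ×ˢ Icc (0:ℝ) 1) := by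
  have hJ : ∀ n, ∃ J : Finset ℝ, J.card ≤ N ∧ IsJumpSet (F n) J := fun n =>
    let ⟨_, hs, h⟩ := hjumps n
    exists_isJumpSet_of_card_le hs h
  obtain ⟨J, hJf⟩ := exists_isJumpSet_of_tendsto hf hF hconv hJ
  have key : ∀ ε > 0, ∀ᶠ n in atTop, ∀ p ∈ Icc (0:ℝ) 1 ×ˢ Icc (0:ℝ) 1,
      |dL (F n) p.1 p.2 - dL f p.1 p.2| < ε ∧ |dT (F n) p.1 p.2 - dT f p.1 p.2| < ε := by
    intro ε hε
    obtain ⟨κ, hκ, h⟩ := exists_skor_lt_imp_close hf hJf N hε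
    filter_upwards [hconv.eventually (gt_mem_nhds hκ)] with n hn p hp
    exact h (F n) (hF n) (hJ n) hn p.1 hp.1 p.2 hp.2
  simp only [Metric.tendstoUniformlyOn_iff, Real.dist_eq]
  refine ⟨fun ε hε => ?_, fun ε hε => ?_, fun ε hε => ?_⟩
  · filter_upwards [key ε hε] with n hn p hp
    rw [abs_sub_comm]
    exact (hn p hp).1
  · filter_upwards [key ε hε] with n hn p hp
    rw [abs_sub_comm]
    exact (hn p hp).2
  · filter_upwards [key (ε / 3) (by positivity)] with n hn p hp
    obtain ⟨h1, h2⟩ := hn p hp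
    unfold dV
    rw [abs_lt] at h1 h2 ⊢
    constructor <;> linarith
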